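/- arXiv:1912.04565 — 3 statements merged into one kernel-verified Lean document; each statement's English description precedes it below -/
import Mathlib

section
/- Let I ⊆ ℝ be an open interval containing 0, let p, s : ℝ → ℝ be continuous on I, and let α : ℝ → ℝ be differentiable on I and satisfy the inhomogeneous Bernoulli equation α'(x) + p(x)·α(x) + α(x)² = s(x) for all x ∈ I. Define β(x) = p(x) + 2·α(x), φ(x) = exp(−∫₀ˣ β(y) dy) and Φ(x) = ∫₀ˣ φ(y) dy, and let A, B ∈ ℝ. Then the function g(x) = α(x) + A·φ(x)/(A·Φ(x) + B) is differentiable at every x ∈ I with A·Φ(x) + B ≠ 0, and at every such x it satisfies g'(x) + p(x)·g(x) + g(x)² = s(x). -/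
/-!
With `D = A·Φ + B`, the fundamental theorem of calculus gives `φ' = -β·φ` and `Φ' = φ` on `I`
(`hasDerivAt_integral_of_continuousOn`), so `u = A·φ/D` satisfies `u' = -β·u - u²` wherever `D ≠ 0`.
Since `β = p + 2α`, this is exactly the equation that makes `g = α + u` a solution whenever `α` is:
`g' + p·g + g² = (α' + p·α + α²) + (u' + β·u + u²)`.
-/

open Real MeasureTheory intervalIntegral

/-- The fundamental theorem of calculus on an open interval: only continuity on `I` is available,
but `I` is order-connected, so the segment from `a` to `x` stays inside `I`. -/
lemma hasDerivAt_integral_of_continuousOn {I : Set ℝ} (hIopen : IsOpen I) (hIint : I.OrdConnected)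
    {f : ℝ → ℝ} (hf : ContinuousOn f I) {a x : ℝ} (ha : a ∈ I) (hx : x ∈ I) :
    HasDerivAt (fun t => ∫ y in a..t, f y) (f x) x :=
  integral_hasDerivAt_right ((hf.mono (hIint.uIcc_subset ha hx)).intervalIntegrable)
    (hf.stronglyMeasurableAtFilter hIopen x hx) (hf.continuousAt (hIopen.mem_nhds hx))

/-- Given a special solution `α` of the inhomogeneous Bernoulli ODE
`α' + p·α + α² = s` on an open interval `I` containing `0`, the function
`g = α + A·φ/(A·Φ + B)` (with `β = p + 2α`, `φ(x) = exp(−∫₀ˣ β)`, `Φ(x) = ∫₀ˣ φ`)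
solves the same ODE wherever `A·Φ(x) + B ≠ 0` on `I`. -/
theorem stmt_0
    (I : Set ℝ) (hIopen : IsOpen I) (hIint : I.OrdConnected) (h0I : (0 : ℝ) ∈ I)
    (p s α : ℝ → ℝ)
    (hp : ContinuousOn p I) (hs : ContinuousOn s I)
    (hα : ∀ x ∈ I, DifferentiableAt ℝ α x)
    (hαode : ∀ x ∈ I, deriv α x + p x * α x + (α x) ^ 2 = s x)
    (A B : ℝ)
    (β φ Φ g : ℝ → ℝ)
    (hβ : β = fun x => p x + 2 * α x)
    (hφ : φ = fun x => Real.exp (-∫ y in (0:ℝ)..x, β y))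
    (hΦ : Φ = fun x => ∫ y in (0:ℝ)..x, φ y)
    (hg : g = fun x => α x + A * φ x / (A * Φ x + B)) :
    ∀ x ∈ I, A * Φ x + B ≠ 0 →
      DifferentiableAt ℝ g x ∧
      deriv g x + p x * g x + (g x) ^ 2 = s x := by
  intro x hx hD
  have hβc : ContinuousOn β I := by
    rw [hβ]
    exact hp.add (continuousOn_const.mul fun y hy => (hα y hy).continuousAt.continuousWithinAt)
  have hφd : ∀ y ∈ I, HasDerivAt φ (φ y * -β y) y := by
    intro y hy
    rw [hφ]
    exact (hasDerivAt_integral_of_continuousOn hIopen hIint hβc h0I hy).neg.exp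
  have hφc : ContinuousOn φ I := fun y hy => (hφd y hy).continuousAt.continuousWithinAt
  have hΦd : HasDerivAt Φ (φ x) x := by
    rw [hΦ]
    exact hasDerivAt_integral_of_continuousOn hIopen hIint hφc h0I hx
  have hgd : HasDerivAt g (deriv α x +
      (A * (φ x * -β x) * (A * Φ x + B) - A * φ x * (A * φ x)) / (A * Φ x + B) ^ 2) x := by
    rw [hg]
    exact (hα x hx).hasDerivAt.add
      (((hφd x hx).const_mul A).div ((hΦd.const_mul A).add_const B) hD)
  refine ⟨hgd.differentiableAt, ?_⟩
  have hβx : β x = p x + 2 * α x := by rw [hβ]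
  have hgx : g x = α x + A * φ x / (A * Φ x + B) := by rw [hg]
  rw [hgd.deriv, hgx, hβx, ← hαode x hx]
  field_simp
  ring
end

section
/- Let p : ℝ → ℝ be differentiable with p'(x) > 0 for all x ∈ ℝ, let ℓ > 0, and define φ(x) = exp(−∫₀ˣ p(y) dy), Φ(x) = ∫₀ˣ φ(y) dy, and f(x) = log(1 + ℓ·Φ(x)). Assume 1 + ℓ·Φ(x) > 0 for all x ∈ ℝ. Then f'' changes sign at most once, from positive to negative: for all x₁ < x₂, if f''(x₁) ≤ 0 then f''(x₂) < 0. Consequently, the price impact function f has an S shape: it is convex on an initial interval and concave thereafter. -/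
/-!
Put `h x = p x * (1 + ℓ * Φ x) + ℓ * φ x`. Since `Φ' = φ` and `φ' = -p φ`, the quotient rule gives
`f'' = -(ℓ φ / (1 + ℓ Φ)²) * h`, so `f''` and `h` have opposite signs. In `h'` the two terms `± ℓ p φ`
cancel and `h' = p' * (1 + ℓ Φ) > 0` remains. Hence `h` is strictly increasing, and once `f'' ≤ 0`,
that is `h ≥ 0`, one has `h > 0`, that is `f'' < 0`, at every later point.
-/

theorem stmt_10
    (p : ℝ → ℝ) (hp : Differentiable ℝ p) (hp' : ∀ x : ℝ, 0 < deriv p x)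
    (ℓ : ℝ) (hℓ : 0 < ℓ)
    (φ Φ f : ℝ → ℝ)
    (hφ : φ = fun x => Real.exp (-∫ y in (0:ℝ)..x, p y))
    (hΦ : Φ = fun x => ∫ y in (0:ℝ)..x, φ y)
    (hf : f = fun x => Real.log (1 + ℓ * Φ x))
    (hpos : ∀ x : ℝ, 0 < 1 + ℓ * Φ x) :
    ∀ x₁ x₂ : ℝ, x₁ < x₂ →
      deriv (deriv f) x₁ ≤ 0 → deriv (deriv f) x₂ < 0 := by
  have hφpos : ∀ x, 0 < φ x := fun x => by rw [hφ]; exact Real.exp_pos _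
  have dφ : ∀ x, HasDerivAt φ (-(p x * φ x)) x := fun x => by
    have h := (hp.continuous.integral_hasStrictDerivAt 0 x).hasDerivAt.neg.exp
    rw [hφ]
    exact h.congr_deriv (by simp only [Pi.neg_apply]; ring)
  have hφc : Continuous φ := continuous_iff_continuousAt.2 fun x => (dφ x).continuousAt
  have dΦ : ∀ x, HasDerivAt Φ (φ x) x := fun x => by
    rw [hΦ]
    exact (hφc.integral_hasStrictDerivAt 0 x).hasDerivAt
  have dg : ∀ x, HasDerivAt (fun x => 1 + ℓ * Φ x) (ℓ * φ x) x := fun x =>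
    ((dΦ x).const_mul ℓ).const_add 1
  have df : deriv f = fun x => ℓ * φ x / (1 + ℓ * Φ x) := by
    funext x
    rw [hf]
    exact ((dg x).log (hpos x).ne').deriv
  have ddf : ∀ x, deriv (deriv f) x =
      -(ℓ * φ x / (1 + ℓ * Φ x) ^ 2 * (p x * (1 + ℓ * Φ x) + ℓ * φ x)) := fun x => by
    rw [df]
    refine ((((dφ x).const_mul ℓ).div (dg x) (hpos x).ne').congr_deriv ?_).deriv
    ring
  have hmono : StrictMono fun x => p x * (1 + ℓ * Φ x) + ℓ * φ x := by
    refine strictMono_of_deriv_pos fun x => ?_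
    have h : HasDerivAt (fun x => p x * (1 + ℓ * Φ x) + ℓ * φ x)
        (deriv p x * (1 + ℓ * Φ x)) x :=
      (((hp x).hasDerivAt.mul (dg x)).add ((dφ x).const_mul ℓ)).congr_deriv (by ring)
    rw [h.deriv]
    exact mul_pos (hp' x) (hpos x)
  have hc : ∀ x, 0 < ℓ * φ x / (1 + ℓ * Φ x) ^ 2 := fun x =>
    div_pos (mul_pos hℓ (hφpos x)) (pow_pos (hpos x) 2)
  intro x₁ x₂ hlt h₁
  rw [ddf, neg_nonpos] at h₁
  rw [ddf, neg_lt_zero]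
  exact mul_pos (hc x₂) ((nonneg_of_mul_nonneg_right h₁ (hc x₁)).trans_lt (hmono hlt))
end

section
/- Let p ∈ ℝ, q > 0 and ℓ > 0, let N denote the standard normal cumulative distribution function, define φ(x) = exp(−p·x − (q/2)·x²), Φ(x) = ∫₀ˣ φ(y) dy, and h(x) = (p + q·x)·(1 + ℓ·Φ(x)) + ℓ·φ(x), and assume 1 − ℓ·√(2π/q)·exp(p²/(2q))·N(p/√q) > 0. Then h is strictly increasing on ℝ, h(x) → −∞ as x → −∞, and h(−p/q) = ℓ·φ(−p/q) > 0; hence h has a unique zero x₀ ∈ ℝ and x₀ < −p/q. Moreover the price impact function f(x) = log(1 + ℓ·Φ(x)) satisfies f''(x) > 0 for all x < x₀ and f''(x) < 0 for all x > x₀, i.e., f is strictly convex on (−∞, x₀) and strictly concave on (x₀, ∞). -/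
/-!
Differentiating `φ` gives `φ' = -(p + q x) φ`, so the terms of `h'` containing `φ` cancel and
`h' = q (1 + ℓ Φ)`. Completing the square identifies the constraint with
`0 < c`, where `c = 1 - ℓ ∫_{-∞}^0 φ` (`gaussian_Iic_zero`). Since
`1 + ℓ Φ(x) = c + ℓ ∫_{-∞}^x φ ≥ c`, the derivative of `h` is bounded below by the positive
constant `q c`. This one bound yields strict monotonicity and, by the mean value inequality,
the linear upper bound on `h` near `-∞` (`tendsto_atBot_of_le_deriv`). The zero of `h` comes from
the intermediate value theorem, and the sign of `f'' = -ℓ φ h / (1 + ℓ Φ)²` is opposite to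
that of `h`.
-/

open Real MeasureTheory intervalIntegral Filter

/-- Completing the square: `-p x - (q/2) x² = p²/(2q) - (√q x + p/√q)²/2`. -/
lemma exp_complete_square (p q x : ℝ) (hq : 0 < q) :
    Real.exp (-p * x - q / 2 * x ^ 2) =
      Real.exp (p ^ 2 / (2 * q)) *
        Real.exp (-(Real.sqrt q * x + p / Real.sqrt q) ^ 2 / 2) := by
  rw [← Real.exp_add]
  congr 1
  have h1 : Real.sqrt q ≠ 0 := (Real.sqrt_pos.2 hq).ne'
  have h2 : Real.sqrt q ^ 2 = q := Real.sq_sqrt hq.le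
  have h3 : (Real.sqrt q * x + p / Real.sqrt q) ^ 2 = q * x ^ 2 + 2 * p * x + p ^ 2 / q := by
    rw [add_sq, mul_pow, div_pow, h2]
    field_simp
  rw [h3]
  field_simp
  ring

lemma integrable_exp_quadratic (p q : ℝ) (hq : 0 < q) :
    Integrable (fun x : ℝ => Real.exp (-p * x - q / 2 * x ^ 2)) := by
  have h0 : Integrable (fun x : ℝ => Real.exp (-(1 / 2) * x ^ 2)) :=
    integrable_exp_neg_mul_sq (by norm_num)
  have h1 := ((h0.comp_add_right (p / Real.sqrt q)).comp_mul_left'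
    (Real.sqrt_pos.2 hq).ne').const_mul (Real.exp (p ^ 2 / (2 * q)))
  refine h1.congr (Filter.Eventually.of_forall fun x => ?_)
  simp only [exp_complete_square p q x hq]
  ring_nf

/-- The affine substitution `u = a x + b` with `a > 0` on a left half-line. -/
lemma integral_Iic_comp_affine (g : ℝ → ℝ) (a b : ℝ) (ha : 0 < a) :
    ∫ x in Set.Iic (0 : ℝ), g (a * x + b) = a⁻¹ * ∫ u in Set.Iic b, g u := by
  rw [← MeasureTheory.integral_indicator measurableSet_Iic,
    ← MeasureTheory.integral_indicator measurableSet_Iic]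
  have h1 : (Set.Iic (0 : ℝ)).indicator (fun x => g (a * x + b)) =
      fun x => (fun u => (Set.Iic b).indicator g (u + b)) (a * x) := by
    funext x
    have : a * x + b ≤ b ↔ x ≤ 0 := by
      rw [add_le_iff_nonpos_left]
      exact ⟨fun h => nonpos_of_mul_nonpos_right h ha,
        fun h => mul_nonpos_of_nonneg_of_nonpos ha.le h⟩
    simp only [Set.indicator, Set.mem_Iic, this]
  rw [h1, Measure.integral_comp_mul_left (fun u => (Set.Iic b).indicator g (u + b)) a,
    integral_add_right_eq_self (fun u => (Set.Iic b).indicator g u) b,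
    abs_of_pos (inv_pos.2 ha), smul_eq_mul]

/-- With `φ` the integrand on the left, the quantity subtracted in the constraint is
`ℓ ∫_{-∞}^0 φ`. -/
lemma gaussian_Iic_zero (p q : ℝ) (hq : 0 < q) :
    ∫ x in Set.Iic (0 : ℝ), Real.exp (-p * x - q / 2 * x ^ 2) =
      Real.sqrt (2 * Real.pi / q) * Real.exp (p ^ 2 / (2 * q)) *
        ((Real.sqrt (2 * Real.pi))⁻¹ *
          ∫ y in Set.Iic (p / Real.sqrt q), Real.exp (-y ^ 2 / 2)) := by
  simp only [exp_complete_square p q _ hq]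
  rw [MeasureTheory.integral_const_mul, integral_Iic_comp_affine (fun u => Real.exp (-u ^ 2 / 2)) _ _
    (Real.sqrt_pos.2 hq), Real.sqrt_div (by positivity)]
  have h1 : Real.sqrt q ≠ 0 := (Real.sqrt_pos.2 hq).ne'
  have h2 : Real.sqrt (2 * Real.pi) ≠ 0 := (Real.sqrt_pos.2 (by positivity)).ne'
  field_simp

lemma tendsto_atBot_of_le_deriv {h : ℝ → ℝ} (hd : Differentiable ℝ h) {k : ℝ} (hk : 0 < k)
    (hle : ∀ x, k ≤ deriv h x) : Tendsto h atBot atBot := by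
  have hlin : Tendsto (fun x : ℝ => h 0 + k * x) atBot atBot :=
    tendsto_atBot_add_const_left _ _ (tendsto_id.const_mul_atBot hk)
  refine tendsto_atBot_mono' _ ?_ hlin
  filter_upwards [eventually_le_atBot 0] with x hx
  have := mul_sub_le_image_sub_of_le_deriv hd hle hx
  linarith

/-- For `q > 0`, `ℓ > 0`, `φ(x) = exp(−p·x − (q/2)·x²)`, `Φ(x) = ∫₀ˣ φ`,
`h(x) = (p + q·x)·(1 + ℓ·Φ(x)) + ℓ·φ(x)`, under the constraint
`1 − ℓ·√(2π/q)·exp(p²/(2q))·N(p/√q) > 0`: `h` is strictly increasing, `h → −∞` at `−∞`,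
`h(−p/q) = ℓ·φ(−p/q) > 0`; hence `h` has a unique zero `x₀` with `x₀ < −p/q`, and the
price impact function `f(x) = log(1 + ℓ·Φ(x))` satisfies `f'' > 0` on `(−∞, x₀)` and
`f'' < 0` on `(x₀, ∞)`, i.e. `f` is strictly convex on `(−∞, x₀)` and strictly concave
on `(x₀, ∞)`. -/
theorem stmt_15
    (p q ℓ : ℝ) (hq : 0 < q) (hℓ : 0 < ℓ)
    (N : ℝ → ℝ)
    (hN : N = fun t => (Real.sqrt (2 * Real.pi))⁻¹ * ∫ y in Set.Iic t, Real.exp (-y ^ 2 / 2))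
    (φ Φ h f : ℝ → ℝ)
    (hφ : φ = fun x => Real.exp (-p * x - q / 2 * x ^ 2))
    (hΦ : Φ = fun x => ∫ y in (0:ℝ)..x, φ y)
    (hh : h = fun x => (p + q * x) * (1 + ℓ * Φ x) + ℓ * φ x)
    (hf : f = fun x => Real.log (1 + ℓ * Φ x))
    (hconstraint :
      0 < 1 - ℓ * Real.sqrt (2 * Real.pi / q) * Real.exp (p ^ 2 / (2 * q)) * N (p / Real.sqrt q)) :
    StrictMono h ∧
    Tendsto h atBot atBot ∧
    h (-p / q) = ℓ * φ (-p / q) ∧ 0 < h (-p / q) ∧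
    ∃ x₀ : ℝ, h x₀ = 0 ∧ (∀ x : ℝ, h x = 0 → x = x₀) ∧ x₀ < -p / q ∧
      (∀ x : ℝ, x < x₀ → 0 < deriv (deriv f) x) ∧
      (∀ x : ℝ, x₀ < x → deriv (deriv f) x < 0) ∧
      StrictConvexOn ℝ (Set.Iio x₀) f ∧
      StrictConcaveOn ℝ (Set.Ioi x₀) f := by
  have hφpos : ∀ x, 0 < φ x := fun x => by rw [hφ]; exact Real.exp_pos _
  have hφcont : Continuous φ := by rw [hφ]; fun_prop
  have hφint : Integrable φ := by rw [hφ]; exact integrable_exp_quadratic p q hq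
  have hφd : ∀ x, HasDerivAt φ (-(p + q * x) * φ x) x := by
    intro x
    have h1 : HasDerivAt (fun x : ℝ => -p * x - q / 2 * x ^ 2) (-(p + q * x)) x := by
      refine (((hasDerivAt_id x).const_mul (-p)).sub
        ((hasDerivAt_pow 2 x).const_mul (q / 2))).congr_deriv ?_
      simp only [Nat.cast_ofNat, Nat.add_one_sub_one, pow_one]
      ring
    rw [hφ]
    exact h1.exp.congr_deriv (mul_comm _ _)
  have hΦd : ∀ x, HasDerivAt Φ (φ x) x := fun x => by
    rw [hΦ]
    exact intervalIntegral.integral_hasDerivAt_right (hφcont.intervalIntegrable _ _)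
      (hφcont.stronglyMeasurableAtFilter _ _) hφcont.continuousAt
  -- A bound uniform in `x` is needed: positivity of `1 + ℓ Φ` alone would not force `h → -∞`.
  obtain ⟨c, hc, hcle⟩ : ∃ c : ℝ, 0 < c ∧ ∀ x, c ≤ 1 + ℓ * Φ x := by
    refine ⟨1 - ℓ * ∫ x in Set.Iic (0 : ℝ), φ x, ?_, fun x => ?_⟩
    · have h1 := gaussian_Iic_zero p q hq
      rw [hN] at hconstraint
      simp only [hφ]
      rw [h1]
      linarith
    · have h1 : Φ x = (∫ y in Set.Iic x, φ y) - ∫ y in Set.Iic (0 : ℝ), φ y := by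
        rw [hΦ]
        exact (intervalIntegral.integral_Iic_sub_Iic hφint.integrableOn
          hφint.integrableOn).symm
      have h2 : 0 ≤ ∫ y in Set.Iic x, φ y := integral_nonneg fun y => (hφpos y).le
      rw [h1]
      nlinarith [mul_nonneg hℓ.le h2]
  have hgpos : ∀ x, 0 < 1 + ℓ * Φ x := fun x => hc.trans_le (hcle x)
  have hgd : ∀ x, HasDerivAt (fun x => 1 + ℓ * Φ x) (ℓ * φ x) x := fun x =>
    ((hΦd x).const_mul ℓ).const_add 1
  -- The `φ`-terms cancel because `φ' = -(p + q x) φ`.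
  have hhd : ∀ x, HasDerivAt h (q * (1 + ℓ * Φ x)) x := by
    intro x
    have h1 : HasDerivAt (fun x : ℝ => p + q * x) q x := by
      simpa using ((hasDerivAt_id x).const_mul q).const_add p
    rw [hh]
    exact ((h1.mul (hgd x)).add ((hφd x).const_mul ℓ)).congr_deriv (by ring)
  have hhdiff : Differentiable ℝ h := fun x => (hhd x).differentiableAt
  have hmono : StrictMono h := strictMono_of_deriv_pos fun x => by
    rw [(hhd x).deriv]; exact mul_pos hq (hgpos x)
  have hbot : Tendsto h atBot atBot :=
    tendsto_atBot_of_le_deriv hhdiff (mul_pos hq hc) fun x => by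
      rw [(hhd x).deriv]; exact mul_le_mul_of_nonneg_left (hcle x) hq.le
  have hval : h (-p / q) = ℓ * φ (-p / q) := by
    rw [hh]
    have : p + q * (-p / q) = 0 := by field_simp; ring
    simp only [this, zero_mul, zero_add]
  have hvpos : 0 < h (-p / q) := by rw [hval]; exact mul_pos hℓ (hφpos _)
  obtain ⟨x₀, hx₀⟩ : ∃ x₀, h x₀ = 0 := by
    obtain ⟨a, ha⟩ := (hbot.eventually (eventually_le_atBot 0)).exists
    exact mem_range_of_exists_le_of_exists_ge hhdiff.continuous ⟨a, ha⟩ ⟨_, hvpos.le⟩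
  have hfd : ∀ x, HasDerivAt f (ℓ * φ x / (1 + ℓ * Φ x)) x := fun x => by
    rw [hf]; exact (hgd x).log (hgpos x).ne'
  have hfd2 : ∀ x, deriv (deriv f) x = -(ℓ * φ x * h x / (1 + ℓ * Φ x) ^ 2) := by
    intro x
    have h1 : deriv f = fun x => ℓ * φ x / (1 + ℓ * Φ x) := funext fun x => (hfd x).deriv
    rw [h1]
    refine (((hφd x).const_mul ℓ).div (hgd x) (hgpos x).ne').deriv.trans ?_
    rw [hh]
    ring
  have hfcont : Continuous f :=
    continuous_iff_continuousAt.2 fun x => (hfd x).continuousAt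
  have hconv : ∀ x, x < x₀ → 0 < deriv (deriv f) x := by
    intro x hx
    have h1 : h x < 0 := hx₀ ▸ hmono hx
    rw [hfd2, neg_pos]
    exact div_neg_of_neg_of_pos (mul_neg_of_pos_of_neg (mul_pos hℓ (hφpos x)) h1)
      (pow_pos (hgpos x) 2)
  have hconc : ∀ x, x₀ < x → deriv (deriv f) x < 0 := by
    intro x hx
    have h1 : 0 < h x := hx₀ ▸ hmono hx
    rw [hfd2, neg_lt_zero]
    exact div_pos (mul_pos (mul_pos hℓ (hφpos x)) h1) (pow_pos (hgpos x) 2)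
  refine ⟨hmono, hbot, hval, hvpos, x₀, hx₀, fun x hx => hmono.injective (hx.trans hx₀.symm),
    hmono.lt_iff_lt.1 (hx₀ ▸ hvpos), hconv, hconc, ?_, ?_⟩
  · refine strictConvexOn_of_deriv2_pos (convex_Iio _) hfcont.continuousOn fun x hx => ?_
    rw [interior_Iio] at hx
    exact hconv x hx
  · refine strictConcaveOn_of_deriv2_neg (convex_Ioi _) hfcont.continuousOn fun x hx => ?_
    rw [interior_Ioi] at hx
    exact hconc x hx
end
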